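/- arXiv:1704.08083 — 2 statements merged into one kernel-verified Lean document; each statement's English description precedes it below -/
import Mathlib

section
/- Consider the error-free block-coordinate setting: H_1, …, H_m separable real Hilbert spaces with direct Hilbert sum H = H_1 ⊕ ⋯ ⊕ H_m; constants τ_{i,n} ∈ [0,1); for every n, a measurable quasinonexpansive operator T_n: H → H, x ↦ (T_{i,n} x)_{1≤i≤m}, all with a common fixed point x̄ = (x̄_i)_{1≤i≤m}, satisfying ‖T_n x − x̄‖² ≤ Σ_{i=1}^{m} τ_{i,n} ‖x_i − x̄_i‖² for all n and all x ∈ H. The algorithm: (λ_n) a sequence in (0,1] with inf_n λ_n > 0; D = {0,1}^m \ {0}; x_0 an H-valued random variable; (ε_n) identically distributed D-valued random variables; and for all n and i, x_{i,n+1} = x_{i,n} + ε_{i,n} λ_n (T_{i,n}(x_{1,n}, …, x_{m,n}) − x_{i,n}). Let (F_n) be a filtration with σ(x_0, …, x_n) ⊆ F_n for all n, assume for every n that σ(ε_n) and F_n are independent, and that p_i = P[ε_{i,0} = 1] > 0 for every i. Set χ_n = 1 − λ_n min_{1≤i≤m} p_i(1 − τ_{i,n}) for every n. Then for every n, E[‖x_{n+1}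 − x̄‖² | F_0] ≤ (max_{1≤i≤m} p_i / min_{1≤i≤m} p_i) (Π_{k=0}^{n} χ_k) ‖x_0 − x̄‖² P-almost surely; moreover, if max_{1≤i≤m} sup_n τ_{i,n} < 1, then sup_n χ_n < 1, so the conditional mean-square error converges linearly to 0. -/
open MeasureTheory Filter Finset ProbabilityTheory

lemma bc_convex {E : Type*} [NormedAddCommGroup E] [InnerProductSpace ℝ E]
    (a t z : E) (c : ℝ) (h0 : 0 ≤ c) (h1 : c ≤ 1) :
    ‖a + c • (t - a) - z‖ ^ 2 ≤ ‖a - z‖ ^ 2 + c * (‖t - z‖ ^ 2 - ‖a - z‖ ^ 2) := by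
  have e : a + c • (t - a) - z = (1 - c) • (a - z) + c • (t - z) := by
    module
  have h : ‖a + c • (t - a) - z‖ ≤ (1 - c) * ‖a - z‖ + c * ‖t - z‖ := by
    rw [e]
    refine (norm_add_le _ _).trans ?_
    rw [norm_smul, norm_smul, Real.norm_of_nonneg h0, Real.norm_of_nonneg (sub_nonneg.2 h1)]
  have h2 : ‖a + c • (t - a) - z‖ ^ 2 ≤ ((1 - c) * ‖a - z‖ + c * ‖t - z‖) ^ 2 :=
    pow_le_pow_left₀ (norm_nonneg _) h 2
  nlinarith [mul_nonneg (mul_nonneg h0 (sub_nonneg.2 h1)) (sq_nonneg (‖a - z‖ - ‖t - z‖))]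

lemma bc_indep_integral {Ω : Type*} {F : MeasurableSpace Ω} (μ : Measure Ω)
    [IsProbabilityMeasure μ] {m : ℕ} (e : Ω → Fin m → ℝ) (he : Measurable e)
    (G : MeasurableSpace Ω) (hG : G ≤ F)
    (hind : Indep (MeasurableSpace.comap e inferInstance) G μ)
    (i : Fin m) (g : Ω → ℝ) (hg : Measurable[G] g) (A : Set Ω) (hA : MeasurableSet[G] A) :
    ∫ ω in A, e ω i * g ω ∂μ = (∫ ω, e ω i ∂μ) * ∫ ω in A, g ω ∂μ := by
  have hgA : Measurable[G] (A.indicator g) := hg.indicator hA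
  have hI : IndepFun (fun ω => e ω i) (A.indicator g) μ := by
    refine indep_of_indep_of_le_left (indep_of_indep_of_le_right hind hgA.comap_le) ?_
    rintro _ ⟨s, hs, rfl⟩
    exact ⟨(fun y : Fin m → ℝ => y i) ⁻¹' s, measurable_pi_apply i hs, rfl⟩
  have h := hI.integral_fun_mul_eq_mul_integral
    ((measurable_pi_apply i).comp he).aestronglyMeasurable
    (hgA.mono hG le_rfl).aestronglyMeasurable
  rw [integral_indicator (hG _ hA)] at h
  rw [← h, ← integral_indicator (hG _ hA)]
  congr 1
  ext ω
  by_cases hω : ω ∈ A <;> simp [hω]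

lemma bc_eps_integral {Ω : Type*} {F : MeasurableSpace Ω} (μ : Measure Ω)
    [IsProbabilityMeasure μ] {m : ℕ} (e e0 : Ω → Fin m → ℝ) (he : Measurable e)
    (he0 : Measurable e0) (hval : ∀ ω i, e0 ω i = 0 ∨ e0 ω i = 1)
    (hid : Measure.map e μ = Measure.map e0 μ) (i : Fin m) :
    ∫ ω, e ω i ∂μ = (μ {ω | e0 ω i = 1}).toReal := by
  have h1 : ∫ ω, e ω i ∂μ = ∫ y, y i ∂(Measure.map e μ) :=
    (integral_map he.aemeasurable (measurable_pi_apply i).aestronglyMeasurable).symm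
  have h2 : ∫ ω, e0 ω i ∂μ = ∫ y, y i ∂(Measure.map e0 μ) :=
    (integral_map he0.aemeasurable (measurable_pi_apply i).aestronglyMeasurable).symm
  rw [h1, hid, ← h2]
  have hm : MeasurableSet {ω | e0 ω i = 1} :=
    ((measurable_pi_apply i).comp he0) (measurableSet_singleton (1 : ℝ))
  have : (fun ω => e0 ω i) = {ω | e0 ω i = 1}.indicator (fun _ => (1 : ℝ)) := by
    ext ω
    rcases hval ω i with h | h <;> simp [Set.indicator, h]
  rw [this, integral_indicator hm]
  simp [Measure.real]

/-- Conditional expectation bound from set-integral bounds, with no integrability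
assumption. -/
lemma bc_condExp_le {Ω : Type*} {F : MeasurableSpace Ω} (μ : Measure Ω)
    [IsProbabilityMeasure μ] (G : MeasurableSpace Ω) (hG : G ≤ F) (f S g : Ω → ℝ)
    (hS : Measurable[G] S)
    (hg0 : ∀ ω, 0 ≤ g ω) (hg : Measurable[G] g)
    (hgS : ∀ k : ℕ, ∃ K : ℝ, ∀ ω, S ω ≤ k → g ω ≤ K)
    (h : ∀ k : ℕ, ∀ A, MeasurableSet[G] A → (∀ ω ∈ A, S ω ≤ k) →
      ∫ ω in A, f ω ∂μ ≤ ∫ ω in A, g ω ∂μ) :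
    ∀ᵐ ω ∂μ, (μ[f|G]) ω ≤ g ω := by
  by_cases hf : Integrable f μ
  swap
  · rw [condExp_of_not_integrable hf]
    exact Eventually.of_forall hg0
  have hc : Measurable[G] (μ[f|G]) := stronglyMeasurable_condExp.measurable
  have key : ∀ k : ℕ, ∀ᵐ ω ∂μ, ¬ (g ω < (μ[f|G]) ω ∧ S ω ≤ k) := by
    intro k
    set A : Set Ω := {ω | g ω < (μ[f|G]) ω ∧ S ω ≤ k} with hAdef
    have hA : MeasurableSet[G] A :=
      (measurableSet_lt hg hc).inter (measurableSet_le hS measurable_const)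
    have hA' := hG _ hA
    have h1 := h k A hA (fun ω hω => hω.2)
    rw [← setIntegral_condExp hG hf hA] at h1
    obtain ⟨K, hK⟩ := hgS k
    have hgi : IntegrableOn g A μ := by
      refine Integrable.of_bound (C := K) (hg.mono hG le_rfl).aestronglyMeasurable ?_
      filter_upwards [ae_restrict_mem hA'] with ω hω
      rw [Real.norm_of_nonneg (hg0 ω)]
      exact hK ω hω.2
    have hci : IntegrableOn (μ[f|G]) A μ := integrable_condExp.integrableOn
    have h2 : ∫ ω in A, ((μ[f|G]) ω - g ω) ∂μ ≤ 0 := by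
      rw [integral_sub hci hgi]
      linarith
    have hnn : 0 ≤ᵐ[μ.restrict A] fun ω => (μ[f|G]) ω - g ω := by
      filter_upwards [ae_restrict_mem hA'] with ω hω
      exact sub_nonneg.2 hω.1.le
    have h3 : ∫ ω in A, ((μ[f|G]) ω - g ω) ∂μ = 0 :=
      le_antisymm h2 (integral_nonneg_of_ae hnn)
    have h4 := (integral_eq_zero_iff_of_nonneg_ae hnn (hci.sub hgi)).1 h3
    have h5 := (ae_restrict_iff' hA').1 h4
    filter_upwards [h5] with ω hω hωA
    have := hω hωA
    simp only [Pi.zero_apply] at this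
    have := hωA.1
    linarith
  filter_upwards [ae_all_iff.2 key] with ω hω
  by_contra hlt
  obtain ⟨k, hk⟩ := exists_nat_ge (S ω)
  exact hω k ⟨not_le.1 hlt, hk⟩

/-- Error-free case: linear convergence of the conditional mean-square error of the
block-coordinate fixed point algorithm with random sweeping. -/
theorem block_coordinate_error_free_linear_convergence
    {Ω : Type*} {F : MeasurableSpace Ω} (μ : Measure Ω) [IsProbabilityMeasure μ]
    {m : ℕ} [NeZero m] {H : Fin m → Type*}
    [∀ i, NormedAddCommGroup (H i)] [∀ i, InnerProductSpace ℝ (H i)]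
    [∀ i, CompleteSpace (H i)] [∀ i, SecondCountableTopology (H i)]
    [∀ i, MeasurableSpace (H i)] [∀ i, BorelSpace (H i)]
    (T : ℕ → (∀ i, H i) → ∀ i, H i) (hT_meas : ∀ n, Measurable (T n))
    (τ : Fin m → ℕ → ℝ) (hτ : ∀ i n, τ i n ∈ Set.Ico (0 : ℝ) 1)
    (xbar : ∀ i, H i)
    (hT_qne : ∀ n (z : ∀ i, H i), T n z = z → ∀ x : ∀ i, H i,
      ∑ i, ‖T n x i - z i‖ ^ 2 ≤ ∑ i, ‖x i - z i‖ ^ 2)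
    (hT_fix : ∀ n, T n xbar = xbar)
    (hT_contr : ∀ n (x : ∀ i, H i),
      ∑ i, ‖T n x i - xbar i‖ ^ 2 ≤ ∑ i, τ i n * ‖x i - xbar i‖ ^ 2)
    (lam : ℕ → ℝ) (hlam : ∀ n, lam n ∈ Set.Ioc (0 : ℝ) 1) (hlam_inf : 0 < ⨅ n, lam n)
    (x : ℕ → Ω → ∀ i, H i) (ε : ℕ → Ω → Fin m → ℝ)
    (hx_meas : ∀ n, Measurable (x n))
    (hε_meas : ∀ n, Measurable (ε n))
    (hε_val : ∀ n ω i, ε n ω i = 0 ∨ ε n ω i = 1)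
    (hε_D : ∀ n ω, ∃ i, ε n ω i = 1)
    (hε_ident : ∀ n, Measure.map (ε n) μ = Measure.map (ε 0) μ)
    (hAlgo : ∀ n ω i,
      x (n + 1) ω i = x n ω i + (ε n ω i * lam n) • (T n (x n ω) i - x n ω i))
    (ℱ : ℕ → MeasurableSpace Ω)
    (hℱ_mono : ∀ n, ℱ n ≤ ℱ (n + 1)) (hℱ_le : ∀ n, ℱ n ≤ F)
    (hx_adapted : ∀ n k, k ≤ n → Measurable[ℱ n] (x k))
    (hindep : ∀ n, Indep (MeasurableSpace.comap (ε n) inferInstance) (ℱ n) μ)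
    (p : Fin m → ℝ) (hp_def : ∀ i, p i = (μ {ω | ε 0 ω i = 1}).toReal)
    (hp_pos : ∀ i, 0 < p i)
    :
    (∀ n, ∀ᵐ ω ∂μ,
      (μ[fun ω' => ∑ i, ‖x (n + 1) ω' i - xbar i‖ ^ 2|ℱ 0]) ω
        ≤ (Finset.univ.sup' Finset.univ_nonempty p
              / Finset.univ.inf' Finset.univ_nonempty p)
            * ((∏ k ∈ Finset.range (n + 1),
                  (1 - lam k * Finset.univ.inf' Finset.univ_nonempty
                      (fun i => p i * (1 - τ i k))))
                * ∑ i, ‖x 0 ω i - xbar i‖ ^ 2)) ∧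
      (Finset.univ.sup' Finset.univ_nonempty (fun i => ⨆ n, τ i n) < 1 →
        (⨆ n, (1 - lam n * Finset.univ.inf' Finset.univ_nonempty
            (fun i => p i * (1 - τ i n)))) < 1) := by
  set pmax := Finset.univ.sup' Finset.univ_nonempty p with hpmax
  set pmin := Finset.univ.inf' Finset.univ_nonempty p with hpmin
  have hpmin_pos : 0 < pmin := by
    rw [hpmin, Finset.lt_inf'_iff]
    exact fun i _ => hp_pos i
  have hpmin_le : ∀ i, pmin ≤ p i := fun i => Finset.inf'_le _ (Finset.mem_univ i)
  have hle_pmax : ∀ i, p i ≤ pmax := fun i => Finset.le_sup' p (Finset.mem_univ i)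
  have hp_le : ∀ i, p i ≤ 1 := fun i => by
    rw [hp_def i]
    exact measureReal_le_one
  have i0 : Fin m := ⟨0, Nat.pos_of_ne_zero (NeZero.ne m)⟩
  have hpmax_pos : 0 < pmax := (hp_pos i0).trans_le (hle_pmax i0)
  set c : ℕ → ℝ := fun k => Finset.univ.inf' Finset.univ_nonempty
    (fun i => p i * (1 - τ i k)) with hc
  have hc_le : ∀ k i, c k ≤ p i * (1 - τ i k) := fun k i =>
    Finset.inf'_le (fun i => p i * (1 - τ i k)) (Finset.mem_univ i)
  have hχ : ∀ k, 0 ≤ 1 - lam k * c k := by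
    intro k
    have h1 : c k ≤ 1 := (hc_le k i0).trans
      (mul_le_one₀ (hp_le i0) (by linarith [(hτ i0 k).2]) (by linarith [(hτ i0 k).1]))
    nlinarith [(hlam k).1, (hlam k).2]
  refine ⟨fun n => ?_, fun hs => ?_⟩
  · have hnorm : ∀ i, Measurable (fun y : ∀ i, H i => ‖y i - xbar i‖ ^ 2) := fun i =>
      (((measurable_pi_apply i).sub_const (xbar i)).norm).pow_const 2
    have hA_meas : ∀ n i, Measurable[ℱ n] (fun ω => ‖x n ω i - xbar i‖ ^ 2) := by
      intro n i
      exact (hnorm i).comp (hx_adapted n n le_rfl)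
    have hT_meas' : ∀ n i, Measurable[ℱ n] (fun ω => ‖T n (x n ω) i - xbar i‖ ^ 2) := by
      intro n i
      exact ((hnorm i).comp (hT_meas n)).comp (hx_adapted n n le_rfl)
    have hmono0 : ∀ n, ℱ 0 ≤ ℱ n := fun n => monotone_nat_of_le_succ hℱ_mono (Nat.zero_le n)
    have hstep : ∀ n ω i, ‖x (n + 1) ω i - xbar i‖ ^ 2 ≤ ‖x n ω i - xbar i‖ ^ 2
        + ε n ω i * lam n * (‖T n (x n ω) i - xbar i‖ ^ 2 - ‖x n ω i - xbar i‖ ^ 2) := by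
      intro n ω i
      rw [hAlgo]
      apply bc_convex
      · rcases hε_val n ω i with h | h <;> simp [h, (hlam n).1.le]
      · rcases hε_val n ω i with h | h <;> simp [h, (hlam n).2]
    have hTsum : ∀ n ω i, ‖T n (x n ω) i - xbar i‖ ^ 2 ≤ ∑ i, ‖x n ω i - xbar i‖ ^ 2 := by
      intro n ω i
      exact (Finset.single_le_sum (f := fun i => ‖T n (x n ω) i - xbar i‖ ^ 2)
        (fun _ _ => sq_nonneg _) (Finset.mem_univ i)).trans (hT_qne n xbar (hT_fix n) (x n ω))
    have hgrow : ∀ n ω, ∑ i, ‖x n ω i - xbar i‖ ^ 2 ≤ 2 ^ n * ∑ i, ‖x 0 ω i - xbar i‖ ^ 2 := by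
      intro n ω
      induction n with
      | zero => simp
      | succ n ih =>
        have h1 : ∑ i, ‖x (n + 1) ω i - xbar i‖ ^ 2 ≤
            ∑ i, (‖x n ω i - xbar i‖ ^ 2 + ‖T n (x n ω) i - xbar i‖ ^ 2) := by
          refine Finset.sum_le_sum fun i _ => (hstep n ω i).trans ?_
          have ha := sq_nonneg ‖x n ω i - xbar i‖
          have ht := sq_nonneg ‖T n (x n ω) i - xbar i‖
          have := (hlam n).1
          have := (hlam n).2
          rcases hε_val n ω i with h | h <;> rw [h] <;> nlinarith
        rw [Finset.sum_add_distrib] at h1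
        have h2 := hT_qne n xbar (hT_fix n) (x n ω)
        rw [pow_succ]
        linarith
    -- localized integrability
    have hint : ∀ (A : Set Ω) (K : ℝ), MeasurableSet[ℱ 0] A →
        (∀ ω ∈ A, ∑ i, ‖x 0 ω i - xbar i‖ ^ 2 ≤ K) → ∀ n i,
        IntegrableOn (fun ω => ‖x n ω i - xbar i‖ ^ 2) A μ ∧
        IntegrableOn (fun ω => ‖T n (x n ω) i - xbar i‖ ^ 2) A μ := by
      intro A K hA hK n i
      have hb : ∀ ω ∈ A, ∑ i, ‖x n ω i - xbar i‖ ^ 2 ≤ 2 ^ n * K := fun ω hω =>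
        (hgrow n ω).trans (by gcongr; exact hK ω hω)
      constructor
      · refine Integrable.of_bound (C := 2 ^ n * K)
          ((hA_meas n i).mono (hℱ_le n) le_rfl).aestronglyMeasurable ?_
        filter_upwards [ae_restrict_mem (hℱ_le 0 _ hA)] with ω hω
        rw [Real.norm_of_nonneg (sq_nonneg _)]
        exact (Finset.single_le_sum (f := fun i => ‖x n ω i - xbar i‖ ^ 2)
          (fun _ _ => sq_nonneg _) (Finset.mem_univ i)).trans (hb ω hω)
      · refine Integrable.of_bound (C := 2 ^ n * K)
          ((hT_meas' n i).mono (hℱ_le n) le_rfl).aestronglyMeasurable ?_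
        filter_upwards [ae_restrict_mem (hℱ_le 0 _ hA)] with ω hω
        rw [Real.norm_of_nonneg (sq_nonneg _)]
        exact (hTsum n ω i).trans (hb ω hω)
    -- one step of the weighted recursion
    have hrec : ∀ (A : Set Ω) (K : ℝ), MeasurableSet[ℱ 0] A →
        (∀ ω ∈ A, ∑ i, ‖x 0 ω i - xbar i‖ ^ 2 ≤ K) → ∀ n,
        ∑ i, (p i)⁻¹ * ∫ ω in A, ‖x (n + 1) ω i - xbar i‖ ^ 2 ∂μ ≤
        (1 - lam n * c n) * ∑ i, (p i)⁻¹ * ∫ ω in A, ‖x n ω i - xbar i‖ ^ 2 ∂μ := by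
      intro A K hA hK n
      have hI := hint A K hA hK
      have h1 : ∀ i, (p i)⁻¹ * ∫ ω in A, ‖x (n + 1) ω i - xbar i‖ ^ 2 ∂μ ≤
          (p i)⁻¹ * ∫ ω in A, ‖x n ω i - xbar i‖ ^ 2 ∂μ
          + lam n * (∫ ω in A, ‖T n (x n ω) i - xbar i‖ ^ 2 ∂μ
            - ∫ ω in A, ‖x n ω i - xbar i‖ ^ 2 ∂μ) := by
        intro i
        have hd : IntegrableOn (fun ω =>
            ‖T n (x n ω) i - xbar i‖ ^ 2 - ‖x n ω i - xbar i‖ ^ 2) A μ :=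
          (hI n i).2.sub (hI n i).1
        have hed : IntegrableOn (fun ω => ε n ω i *
            (‖T n (x n ω) i - xbar i‖ ^ 2 - ‖x n ω i - xbar i‖ ^ 2)) A μ := by
          refine Integrable.bdd_mul (c := 1) hd
            ((measurable_pi_apply i).comp (hε_meas n)).aestronglyMeasurable ?_
          refine Eventually.of_forall fun ω => ?_
          rcases hε_val n ω i with h | h <;> simp [h]
        have e1 := bc_indep_integral μ (ε n) (hε_meas n) (ℱ n) (hℱ_le n) (hindep n) i
          (fun ω => ‖T n (x n ω) i - xbar i‖ ^ 2 - ‖x n ω i - xbar i‖ ^ 2)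
          ((hT_meas' n i).sub (hA_meas n i)) A (hmono0 n _ hA)
        rw [bc_eps_integral μ (ε n) (ε 0) (hε_meas n) (hε_meas 0) (hε_val 0) (hε_ident n) i,
          ← hp_def i, integral_sub (hI n i).2 (hI n i).1] at e1
        have e2 : ∫ ω in A, ‖x (n + 1) ω i - xbar i‖ ^ 2 ∂μ ≤
            ∫ ω in A, (‖x n ω i - xbar i‖ ^ 2 + lam n * (ε n ω i *
            (‖T n (x n ω) i - xbar i‖ ^ 2 - ‖x n ω i - xbar i‖ ^ 2))) ∂μ := by
          refine integral_mono (hI (n + 1) i).1 ((hI n i).1.add (hed.const_mul _)) fun ω => ?_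
          refine (hstep n ω i).trans (le_of_eq ?_)
          ring
        rw [integral_add (hI n i).1 (hed.const_mul _), integral_const_mul, e1] at e2
        refine (mul_le_mul_of_nonneg_left e2 (inv_nonneg.2 (hp_pos i).le)).trans (le_of_eq ?_)
        have := (hp_pos i).ne'
        field_simp
      have h2 : ∑ i, ∫ ω in A, ‖T n (x n ω) i - xbar i‖ ^ 2 ∂μ ≤
          ∑ i, τ i n * ∫ ω in A, ‖x n ω i - xbar i‖ ^ 2 ∂μ := by
        simp_rw [← integral_const_mul]
        rw [← integral_finsetSum _ (fun i _ => (hI n i).2),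
          ← integral_finsetSum _ (fun i _ => (hI n i).1.const_mul _)]
        exact integral_mono (integrable_finsetSum _ (fun i _ => (hI n i).2))
          (integrable_finsetSum _ (fun i _ => (hI n i).1.const_mul _))
          fun ω => hT_contr n (x n ω)
      have h3 : ∀ i, c n * ((p i)⁻¹ * ∫ ω in A, ‖x n ω i - xbar i‖ ^ 2 ∂μ) ≤
          (1 - τ i n) * ∫ ω in A, ‖x n ω i - xbar i‖ ^ 2 ∂μ := by
        intro i
        have hnn : 0 ≤ ∫ ω in A, ‖x n ω i - xbar i‖ ^ 2 ∂μ :=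
          integral_nonneg fun ω => sq_nonneg _
        refine (mul_le_mul_of_nonneg_right (hc_le n i)
          (mul_nonneg (inv_nonneg.2 (hp_pos i).le) hnn)).trans (le_of_eq ?_)
        have := (hp_pos i).ne'
        field_simp
      have h4 := Finset.sum_le_sum fun i (_ : i ∈ Finset.univ) => h1 i
      have h5 := Finset.sum_le_sum fun i (_ : i ∈ Finset.univ) => h3 i
      rw [Finset.sum_add_distrib, ← Finset.mul_sum, Finset.sum_sub_distrib] at h4
      simp only [sub_mul, one_mul, Finset.sum_sub_distrib] at h5
      rw [← Finset.mul_sum] at h5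
      have h6 := mul_le_mul_of_nonneg_left (show c n * ∑ i, (p i)⁻¹ *
        ∫ ω in A, ‖x n ω i - xbar i‖ ^ 2 ∂μ ≤ ∑ i, ∫ ω in A, ‖x n ω i - xbar i‖ ^ 2 ∂μ -
        ∑ i, ∫ ω in A, ‖T n (x n ω) i - xbar i‖ ^ 2 ∂μ by linarith) (hlam n).1.le
      linarith
    have hiter : ∀ (A : Set Ω) (K : ℝ), MeasurableSet[ℱ 0] A →
        (∀ ω ∈ A, ∑ i, ‖x 0 ω i - xbar i‖ ^ 2 ≤ K) → ∀ n,
        ∑ i, (p i)⁻¹ * ∫ ω in A, ‖x n ω i - xbar i‖ ^ 2 ∂μ ≤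
        (∏ k ∈ Finset.range n, (1 - lam k * c k)) *
          ∑ i, (p i)⁻¹ * ∫ ω in A, ‖x 0 ω i - xbar i‖ ^ 2 ∂μ := by
      intro A K hA hK n
      induction n with
      | zero => simp
      | succ n ih =>
        rw [Finset.prod_range_succ]
        have := mul_le_mul_of_nonneg_left ih (hχ n)
        have := hrec A K hA hK n
        linarith
    have hP : 0 ≤ ∏ k ∈ Finset.range (n + 1), (1 - lam k * c k) :=
      Finset.prod_nonneg fun k _ => hχ k
    -- the localized set-integral bound
    have hset : ∀ (A : Set Ω) (K : ℝ), MeasurableSet[ℱ 0] A →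
        (∀ ω ∈ A, ∑ i, ‖x 0 ω i - xbar i‖ ^ 2 ≤ K) →
        ∫ ω in A, ∑ i, ‖x (n + 1) ω i - xbar i‖ ^ 2 ∂μ ≤
        ∫ ω in A, pmax / pmin * ((∏ k ∈ Finset.range (n + 1), (1 - lam k * c k)) *
          ∑ i, ‖x 0 ω i - xbar i‖ ^ 2) ∂μ := by
      intro A K hA hK
      have hI := hint A K hA hK
      rw [integral_const_mul, integral_const_mul,
        integral_finsetSum _ (fun i _ => (hI (n + 1) i).1),
        integral_finsetSum _ (fun i _ => (hI 0 i).1)]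
      have hnn : ∀ n i, 0 ≤ ∫ ω in A, ‖x n ω i - xbar i‖ ^ 2 ∂μ :=
        fun n i => integral_nonneg fun ω => sq_nonneg _
      have h1 : ∑ i, ∫ ω in A, ‖x (n + 1) ω i - xbar i‖ ^ 2 ∂μ ≤
          pmax * ∑ i, (p i)⁻¹ * ∫ ω in A, ‖x (n + 1) ω i - xbar i‖ ^ 2 ∂μ := by
        rw [Finset.mul_sum]
        refine Finset.sum_le_sum fun i _ => ?_
        rw [← mul_assoc]
        refine le_mul_of_one_le_left (hnn _ i) ?_
        rw [← div_eq_mul_inv, one_le_div (hp_pos i)]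
        exact hle_pmax i
      have h2 : ∑ i, (p i)⁻¹ * ∫ ω in A, ‖x 0 ω i - xbar i‖ ^ 2 ∂μ ≤
          pmin⁻¹ * ∑ i, ∫ ω in A, ‖x 0 ω i - xbar i‖ ^ 2 ∂μ := by
        rw [Finset.mul_sum]
        refine Finset.sum_le_sum fun i _ => ?_
        exact mul_le_mul_of_nonneg_right (inv_anti₀ hpmin_pos (hpmin_le i)) (hnn _ i)
      calc _ ≤ _ := h1
        _ ≤ pmax * ((∏ k ∈ Finset.range (n + 1), (1 - lam k * c k)) *
          ∑ i, (p i)⁻¹ * ∫ ω in A, ‖x 0 ω i - xbar i‖ ^ 2 ∂μ) :=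
            mul_le_mul_of_nonneg_left (hiter A K hA hK (n + 1)) hpmax_pos.le
        _ ≤ pmax * ((∏ k ∈ Finset.range (n + 1), (1 - lam k * c k)) *
          (pmin⁻¹ * ∑ i, ∫ ω in A, ‖x 0 ω i - xbar i‖ ^ 2 ∂μ)) :=
            mul_le_mul_of_nonneg_left (mul_le_mul_of_nonneg_left h2 hP) hpmax_pos.le
        _ = _ := by ring
    have hS_meas : Measurable[ℱ 0] (fun ω => ∑ i, ‖x 0 ω i - xbar i‖ ^ 2) :=
      Finset.measurable_fun_sum _ fun i _ => hA_meas 0 i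
    -- localize on the sublevel sets of the initial error
    have hloc : ∀ ω, 0 ≤ ∑ i, ‖x 0 ω i - xbar i‖ ^ 2 := fun ω =>
      Finset.sum_nonneg fun i _ => sq_nonneg _
    exact bc_condExp_le μ (ℱ 0) (hℱ_le 0) _
      (fun ω => ∑ i, ‖x 0 ω i - xbar i‖ ^ 2) _ hS_meas
      (fun ω => mul_nonneg (div_nonneg hpmax_pos.le hpmin_pos.le)
        (mul_nonneg hP (hloc ω)))
      ((hS_meas.const_mul _).const_mul _)
      (fun k => ⟨_, fun ω hω => mul_le_mul_of_nonneg_left (mul_le_mul_of_nonneg_left hω hP)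
        (div_nonneg hpmax_pos.le hpmin_pos.le)⟩)
      (fun k A hA hk => hset A k hA hk)
  · set s := Finset.univ.sup' Finset.univ_nonempty (fun i => ⨆ n, τ i n) with hsdef
    have hτs : ∀ i n, τ i n ≤ s := fun i n =>
      (le_ciSup (f := fun n => τ i n) ⟨1, by rintro _ ⟨k, rfl⟩; exact (hτ i k).2.le⟩ n).trans
        (Finset.le_sup' (fun i => ⨆ n, τ i n) (Finset.mem_univ i))
    have hlamle : ∀ n, (⨅ n, lam n) ≤ lam n := fun n =>
      ciInf_le ⟨0, by rintro _ ⟨k, rfl⟩; exact (hlam k).1.le⟩ n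
    have hcn : ∀ n, pmin * (1 - s) ≤ c n := fun n => by
      rw [hc, Finset.le_inf'_iff]
      intro i _
      exact mul_le_mul (hpmin_le i) (by linarith [hτs i n]) (by linarith) (hp_pos i).le
    have hpos : 0 < pmin * (1 - s) := mul_pos hpmin_pos (by linarith)
    refine lt_of_le_of_lt (ciSup_le (c := 1 - (⨅ n, lam n) * (pmin * (1 - s))) fun n => ?_) ?_
    · have := mul_le_mul (hlamle n) (hcn n) hpos.le (hlam n).1.le
      linarith
    · have := mul_pos hlam_inf hpos
      linarith
end

section
/- Let H be a real Hilbert space, let β ∈ (0,∞), let B: H → H be β-cocoercive, let θ ∈ [0,∞), and let γ ∈ (0,∞). Then the operator Id − γ(B + θ·Id): H → H is Lipschitz continuous with constant |1 − γ(θ + 1/(2β))| + γ/(2β). -/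
open scoped RealInnerProductSpace

/-- Example 4.2: if `B` is `β`-cocoercive, then `Id − γ(B + θ Id)` is Lipschitz
continuous with constant `|1 − γ(θ + 1/(2β))| + γ/(2β)`. -/
theorem forward_step_lipschitz
    {H : Type*} [NormedAddCommGroup H] [InnerProductSpace ℝ H]
    (β : ℝ) (hβ : 0 < β) (B : H → H)
    (hB : ∀ x y : H, β * ‖B x - B y‖ ^ 2 ≤ ⟪x - y, B x - B y⟫)
    (θ : ℝ) (hθ : 0 ≤ θ) (γ : ℝ) (hγ : 0 < γ) :
    ∀ x y : H,
      ‖(x - γ • (B x + θ • x)) - (y - γ • (B y + θ • y))‖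
        ≤ (|1 - γ * (θ + 1 / (2 * β))| + γ / (2 * β)) * ‖x - y‖ := by
  intro x y
  obtain ⟨c, hc⟩ : ∃ c : ℝ, c = 1 / (2 * β) := ⟨_, rfl⟩
  have hcpos : 0 < c := by rw [hc]; positivity
  have hcβ : 2 * c * β = 1 := by rw [hc]; field_simp
  have hdiv : γ / (2 * β) = γ * c := by rw [hc]; ring
  rw [hdiv, ← hc]
  have key : ‖(B x - B y) - c • (x - y)‖ ≤ c * ‖x - y‖ := by
    refine abs_le_of_sq_le_sq' ?_ (by positivity) |>.2
    rw [norm_sub_sq_real, inner_smul_right, norm_smul, Real.norm_of_nonneg hcpos.le,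
      real_inner_comm]
    have h := mul_le_mul_of_nonneg_left (hB x y) (by positivity : 0 ≤ 2 * c)
    have h2 : 2 * c * (β * ‖B x - B y‖ ^ 2) = ‖B x - B y‖ ^ 2 := by
      rw [← mul_assoc, hcβ, one_mul]
    linarith
  have e : (x - γ • (B x + θ • x)) - (y - γ • (B y + θ • y))
      = (1 - γ * (θ + c)) • (x - y) - γ • ((B x - B y) - c • (x - y)) := by
    module
  rw [e]
  refine (norm_sub_le _ _).trans ?_
  rw [norm_smul, norm_smul, Real.norm_eq_abs, Real.norm_of_nonneg hγ.le]
  have := mul_le_mul_of_nonneg_left key hγ.le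
  linarith
end
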